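/- If (T, f) solves the Duffing boundary value problem for (m, β), then f is strictly increasing on [-T, 0] and strictly decreasing on [0, T]. -/

import Mathlib

/-!
An autonomous equation `u'' = g(u)` with `g` locally Lipschitz is invariant under every reflection
`t ↦ 2c - t`, so by uniqueness a solution with `u'(c) = 0` is symmetric about `c`. If `c` lies
strictly between the midpoint of `[a, b]` and `b`, this symmetry carries `b` to an interior point,
where `u` would take the value `u(b)`; this is impossible when `u > u(b)` inside. Hence `u'` has no
zero on the right half, and `u` is injective, thus strictly monotone, there. Reflecting the whole
interval gives the left half.
-/

open Real

/-- The Duffing boundary value problem for `(m, β)`: a time `T > 0` and a `C^∞` function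
`f` with `f'' = -f³ + β·f` on `[-T, T]`, boundary values `f(±T) = 0`,
`f'(-T) = m`, `f'(T) = -m`, and `f > 0` on `(-T, T)`. -/
def IsDuffingSolution (m : ℕ) (β T : ℝ) (f : ℝ → ℝ) : Prop :=
  0 < T ∧ ContDiff ℝ (⊤ : ℕ∞) f ∧
    (∀ t ∈ Set.Icc (-T) T, deriv (deriv f) t = -(f t) ^ 3 + β * f t) ∧
    f (-T) = 0 ∧ f T = 0 ∧ deriv f (-T) = (m : ℝ) ∧ deriv f T = -(m : ℝ) ∧
    (∀ t ∈ Set.Ioo (-T) T, 0 < f t)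

open Set

lemma injOn_Icc_of_hasDerivAt_ne_zero {f f' : ℝ → ℝ} {a b : ℝ} (hcont : ContinuousOn f (Icc a b))
    (hderiv : ∀ t ∈ Ioo a b, HasDerivAt f (f' t) t) (hne : ∀ t ∈ Ioo a b, f' t ≠ 0) :
    InjOn f (Icc a b) := by
  have hlt : ∀ x ∈ Icc a b, ∀ y ∈ Icc a b, x < y → f x ≠ f y := by
    intro x hx y hy hxy hfxy
    have hsub : Ioo x y ⊆ Ioo a b := Ioo_subset_Ioo hx.1 hy.2
    obtain ⟨c, hc, hc0⟩ := exists_hasDerivAt_eq_zero hxy (hcont.mono (Icc_subset_Icc hx.1 hy.2))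
      hfxy fun t ht ↦ hderiv t (hsub ht)
    exact hne c (hsub hc) hc0
  intro x hx y hy hfxy
  by_contra hxy
  rcases lt_or_gt_of_ne hxy with hxy | hyx
  · exact hlt x hx y hy hxy hfxy
  · exact hlt y hy x hx hyx hfxy.symm

/-- `u` solves the autonomous second-order equation `u'' = g(u)` at every point of `s`. The velocity
`u'` is carried as a separate function, so that the pair `(u, u')` is the phase-space curve. -/
structure IsNewtonSolutionOn {E : Type*} [NormedAddCommGroup E] [NormedSpace ℝ E]
    (g : E → E) (u u' : ℝ → E) (s : Set ℝ) : Prop where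
  hasDerivAt : ∀ t ∈ s, HasDerivAt u (u' t) t
  hasDerivAt_velocity : ∀ t ∈ s, HasDerivAt u' (g (u t)) t

namespace IsNewtonSolutionOn

section NormedSpace

variable {E : Type*} [NormedAddCommGroup E] [NormedSpace ℝ E] {g : E → E} {u u' v v' : ℝ → E}

lemma mono {s t : Set ℝ} (hu : IsNewtonSolutionOn g u u' t) (hst : s ⊆ t) :
    IsNewtonSolutionOn g u u' s :=
  ⟨fun x hx ↦ hu.hasDerivAt x (hst hx), fun x hx ↦ hu.hasDerivAt_velocity x (hst hx)⟩

lemma comp_const_sub {s : Set ℝ} (hu : IsNewtonSolutionOn g u u' s) (c : ℝ) :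
    IsNewtonSolutionOn g (fun t ↦ u (c - t)) (fun t ↦ -u' (c - t)) ((c - ·) ⁻¹' s) where
  hasDerivAt t ht := (hu.hasDerivAt _ ht).comp_const_sub c t
  hasDerivAt_velocity t ht := by
    simpa using ((hu.hasDerivAt_velocity _ ht).comp_const_sub c t).fun_neg

lemma eqOn_Ioo {K : NNReal} {S : Set E} {a b c : ℝ} (hg : LipschitzOnWith K g S)
    (hu : IsNewtonSolutionOn g u u' (Ioo a b)) (hv : IsNewtonSolutionOn g v v' (Ioo a b))
    (huS : MapsTo u (Ioo a b) S) (hvS : MapsTo v (Ioo a b) S) (hc : c ∈ Ioo a b)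
    (h : u c = v c) (h' : u' c = v' c) : EqOn u v (Ioo a b) := by
  have hfield : LipschitzOnWith (max 1 (K * 1)) (fun p : E × E ↦ (p.2, g p.1)) (S ×ˢ univ) :=
    LipschitzWith.prod_snd.lipschitzOnWith.prodMk
      (hg.comp LipschitzWith.prod_fst.lipschitzOnWith fun _ hp ↦ hp.1)
  have hphase : EqOn (fun t ↦ (u t, u' t)) (fun t ↦ (v t, v' t)) (Ioo a b) :=
    ODE_solution_unique_of_mem_Ioo (fun _ _ ↦ hfield) hc
      (fun t ht ↦ ⟨(hu.hasDerivAt t ht).prodMk (hu.hasDerivAt_velocity t ht), huS ht, trivial⟩)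
      (fun t ht ↦ ⟨(hv.hasDerivAt t ht).prodMk (hv.hasDerivAt_velocity t ht), hvS ht, trivial⟩)
      (Prod.ext h h')
  exact fun t ht ↦ congrArg Prod.fst (hphase ht)

lemma apply_sub_eq_apply_add {c r : ℝ} (hg : LocallyLipschitz g)
    (hu : IsNewtonSolutionOn g u u' (Ioo (c - r) (c + r)))
    (hcont : ContinuousOn u (Icc (c - r) (c + r))) (hr : 0 < r) (hc : u' c = 0) :
    u (c - r) = u (c + r) := by
  obtain ⟨K, hK⟩ := hg.locallyLipschitzOn.exists_lipschitzOnWith_of_compact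
    (isCompact_Icc.image_of_continuousOn hcont)
  have hIoo : (2 * c - ·) ⁻¹' Ioo (c - r) (c + r) = Ioo (c - r) (c + r) := by
    rw [preimage_const_sub_Ioo]
    ring_nf
  have hIcc : (2 * c - ·) ⁻¹' Icc (c - r) (c + r) = Icc (c - r) (c + r) := by
    rw [preimage_const_sub_Icc]
    ring_nf
  have hmem : c ∈ Ioo (c - r) (c + r) := ⟨by linarith, by linarith⟩
  have hmaps : MapsTo u (Ioo (c - r) (c + r)) (u '' Icc (c - r) (c + r)) :=
    fun t ht ↦ mem_image_of_mem u (Ioo_subset_Icc_self ht)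
  have hrefl_cont : ContinuousOn (fun t ↦ u (2 * c - t)) (Icc (c - r) (c + r)) :=
    hcont.comp (by fun_prop) hIcc.ge
  have hsymm : EqOn (fun t ↦ u (2 * c - t)) u (Ioo (c - r) (c + r)) :=
    eqOn_Ioo hK (hIoo ▸ hu.comp_const_sub (2 * c)) hu (fun t ht ↦ hmaps (hIoo.ge ht)) hmaps
      hmem (by simp [two_mul]) (by simp [two_mul, hc])
  have hclosure : Icc (c - r) (c + r) ⊆ closure (Ioo (c - r) (c + r)) :=
    (closure_Ioo (hmem.1.trans hmem.2).ne).ge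
  have hend := hsymm.of_subset_closure hrefl_cont hcont Ioo_subset_Icc_self hclosure
    (right_mem_Icc.2 (hmem.1.trans hmem.2).le)
  simpa [two_mul, add_sub_add_left_eq_sub] using hend

end NormedSpace

section Real

variable {g f f' : ℝ → ℝ} {a b : ℝ}

lemma velocity_ne_zero_of_mem_right_half (hg : LocallyLipschitz g)
    (hf : IsNewtonSolutionOn g f f' (Ioo a b)) (hcont : ContinuousOn f (Icc a b))
    (hlt : ∀ t ∈ Ioo a b, f b < f t) {c : ℝ} (hc : c ∈ Ioo ((a + b) / 2) b) : f' c ≠ 0 := by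
  intro hc0
  obtain ⟨hmid, hcb⟩ := hc
  have hleft : a < c - (b - c) := by linarith
  have hright : c + (b - c) = b := by ring
  have hrefl : f (c - (b - c)) = f (c + (b - c)) :=
    apply_sub_eq_apply_add hg (hf.mono (Ioo_subset_Ioo hleft.le hright.le))
      (hcont.mono (Icc_subset_Icc hleft.le hright.le)) (sub_pos.2 hcb) hc0
  rw [hright] at hrefl
  exact (hlt _ ⟨hleft, by linarith⟩).ne' hrefl

lemma strictAntiOn_right_half (hg : LocallyLipschitz g)
    (hf : IsNewtonSolutionOn g f f' (Ioo a b)) (hab : a < b) (hcont : ContinuousOn f (Icc a b))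
    (hlt : ∀ t ∈ Ioo a b, f b < f t) : StrictAntiOn f (Icc ((a + b) / 2) b) := by
  have hmid : (a + b) / 2 ∈ Ioo a b := ⟨by linarith, by linarith⟩
  have hcont' : ContinuousOn f (Icc ((a + b) / 2) b) := hcont.mono (Icc_subset_Icc_left hmid.1.le)
  have hinj : InjOn f (Icc ((a + b) / 2) b) :=
    injOn_Icc_of_hasDerivAt_ne_zero hcont'
      (fun t ht ↦ hf.hasDerivAt t ⟨hmid.1.trans ht.1, ht.2⟩)
      fun _ ↦ hf.velocity_ne_zero_of_mem_right_half hg hcont hlt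
  exact hcont'.strictAntiOn_of_injOn_Icc hmid.2.le (hlt _ hmid).le hinj

lemma strictMonoOn_left_half (hg : LocallyLipschitz g)
    (hf : IsNewtonSolutionOn g f f' (Ioo a b)) (hab : a < b) (hcont : ContinuousOn f (Icc a b))
    (hlt : ∀ t ∈ Ioo a b, f a < f t) : StrictMonoOn f (Icc a ((a + b) / 2)) := by
  have hIoo : (a + b - ·) ⁻¹' Ioo a b = Ioo a b := by simp
  have hIcc : (a + b - ·) ⁻¹' Icc a b = Icc a b := by simp
  have hrefl : StrictAntiOn (fun t ↦ f (a + b - t)) (Icc ((a + b) / 2) b) :=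
    strictAntiOn_right_half hg (hIoo ▸ hf.comp_const_sub (a + b)) hab
      (hcont.comp (by fun_prop) hIcc.ge) fun t ht ↦ by simpa using hlt _ (hIoo.ge ht)
  intro x hx y hy hxy
  have hmem : ∀ t ∈ Icc a ((a + b) / 2), a + b - t ∈ Icc ((a + b) / 2) b :=
    fun t ht ↦ ⟨by linarith [ht.2], by linarith [ht.1]⟩
  simpa using hrefl (hmem y hy) (hmem x hx) (by linarith)

end Real

end IsNewtonSolutionOn

theorem duffing_monotone_general {g f f' : ℝ → ℝ} {a b : ℝ} (hg : LocallyLipschitz g)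
    (hf : IsNewtonSolutionOn g f f' (Ioo a b)) (hab : a < b) (hcont : ContinuousOn f (Icc a b))
    (ha : ∀ t ∈ Ioo a b, f a < f t) (hb : ∀ t ∈ Ioo a b, f b < f t) :
    StrictMonoOn f (Icc a ((a + b) / 2)) ∧ StrictAntiOn f (Icc ((a + b) / 2) b) :=
  ⟨hf.strictMonoOn_left_half hg hab hcont ha, hf.strictAntiOn_right_half hg hab hcont hb⟩

lemma IsDuffingSolution.isNewtonSolutionOn {m : ℕ} {β T : ℝ} {f : ℝ → ℝ}
    (h : IsDuffingSolution m β T f) :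
    IsNewtonSolutionOn (fun x ↦ -x ^ 3 + β * x) f (deriv f) (Icc (-T) T) where
  hasDerivAt t _ := (h.2.1.differentiable (by simp) t).hasDerivAt
  hasDerivAt_velocity t ht := by
    have hderiv : ContDiff ℝ (⊤ : ℕ∞) (deriv f) := (contDiff_infty_iff_deriv.1 h.2.1).2
    simpa only [h.2.2.1 t ht] using (hderiv.differentiable (by simp) t).hasDerivAt

/-- A Duffing solution is strictly increasing on `[-T, 0]` and strictly decreasing on `[0, T]`. -/
theorem duffing_monotone (m : ℕ) (hm : 0 < m) (β T : ℝ) (f : ℝ → ℝ)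
    (h : IsDuffingSolution m β T f) :
    StrictMonoOn f (Set.Icc (-T) 0) ∧ StrictAntiOn f (Set.Icc 0 T) := by
  have hnewton := h.isNewtonSolutionOn.mono Ioo_subset_Icc_self
  obtain ⟨hT, hsmooth, -, hleft, hright, -, -, hpos⟩ := h
  have hforce : LocallyLipschitz fun x : ℝ ↦ -x ^ 3 + β * x :=
    ContDiff.locallyLipschitz (𝕂 := ℝ) (by fun_prop)
  simpa using duffing_monotone_general hforce hnewton (neg_lt_self hT)
    hsmooth.continuous.continuousOn (by simpa only [hleft] using hpos)
    (by simpa only [hright] using hpos)
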